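/- For all integers n ≥ 1, one has q_2^{(3)}(n) ≥ Q_2^{(3,-)}(n); that is, the number of partitions of n into parts each at least 3 with consecutive parts differing by at least 2 is at least the number of partitions of n into parts congruent to ±3 modulo 5 none of which equals 2. -/

import Mathlib

/-- `q_d^{(a)}(n)`: the number of partitions of `n` into parts of size at least `a`
such that successive parts differ by at least `d`. -/
noncomputable def gapCount (d a n : ℕ) : ℕ :=
  Nat.card {p : n.Partition //
    (∀ x ∈ p.parts, a ≤ x) ∧
    List.Chain' (fun x y => x + d ≤ y) (p.parts.sort (· ≤ ·))}

/-- `Q_d^{(a)}(n)`: the number of partitions of `n` into parts congruent to `a` or `-a`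
modulo `d + 3`. -/
noncomputable def congCount (d a n : ℕ) : ℕ :=
  Nat.card {p : n.Partition //
    ∀ x ∈ p.parts, x ≡ a [MOD d + 3] ∨ x + a ≡ 0 [MOD d + 3]}

/-- `Q_d^{(a,-)}(n)`: as `congCount`, but no part equals `d + 3 - a`. -/
noncomputable def congMinusCount (d a n : ℕ) : ℕ :=
  Nat.card {p : n.Partition //
    (∀ x ∈ p.parts, x ≡ a [MOD d + 3] ∨ x + a ≡ 0 [MOD d + 3]) ∧
    ∀ x ∈ p.parts, x ≠ d + 3 - a}

/-- `Q_d^{(a,-,-)}(n)`: as `congCount`, but no part equals `a` or `d + 3 - a`. -/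
noncomputable def congMinusMinusCount (d a n : ℕ) : ℕ :=
  Nat.card {p : n.Partition //
    (∀ x ∈ p.parts, x ≡ a [MOD d + 3] ∨ x + a ≡ 0 [MOD d + 3]) ∧
    (∀ x ∈ p.parts, x ≠ a) ∧ ∀ x ∈ p.parts, x ≠ d + 3 - a}

/-- `ρ(R; n)`: the number of partitions of `n` all of whose parts lie in `R`. -/
noncomputable def rhoCount (R : Set ℕ) (n : ℕ) : ℕ :=
  Nat.card {p : n.Partition // ∀ x ∈ p.parts, x ∈ R}

/-- `h_n^{(a)}`: the least nonnegative residue of `-n` modulo `a`,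
so that `n + negRes n a = a * ⌈n/a⌉`. -/
def negRes (n a : ℕ) : ℕ := (a - n % a) % a

/-- `⌈d/a⌉` for natural numbers. -/
def cdiv (d a : ℕ) : ℕ := (d + a - 1) / a

open Finset

namespace RogersRamanujan

section CommRing

variable {R : Type*} [CommRing R]

/-- The product `(1 - q ^ (m + 1)) ⋯ (1 - q ^ (m + n))`. -/
def shiftedPochhammer (q : R) (m n : ℕ) : R := ∏ s ∈ range n, (1 - q ^ (m + 1 + s))

/-- The finite `q`-Pochhammer symbol `(q; q)_n`. -/
def qPochhammer (q : R) (n : ℕ) : R := shiftedPochhammer q 0 n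

lemma shiftedPochhammer_succ (q : R) (m n : ℕ) :
    shiftedPochhammer q m (n + 1) = shiftedPochhammer q m n * (1 - q ^ (m + 1 + n)) :=
  prod_range_succ _ _

lemma shiftedPochhammer_succ' (q : R) (m n : ℕ) :
    shiftedPochhammer q m (n + 1) = (1 - q ^ (m + 1)) * shiftedPochhammer q (m + 1) n := by
  rw [shiftedPochhammer, prod_range_succ', mul_comm, shiftedPochhammer]
  congr 1
  exact prod_congr rfl fun s _ ↦ by congr 2; ring

lemma qPochhammer_zero (q : R) : qPochhammer q 0 = 1 := by
  simp [qPochhammer, shiftedPochhammer]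

lemma qPochhammer_succ (q : R) (n : ℕ) :
    qPochhammer q (n + 1) = qPochhammer q n * (1 - q ^ (n + 1)) := by
  rw [qPochhammer, shiftedPochhammer_succ, qPochhammer, Nat.zero_add, Nat.add_comm 1]

lemma qPochhammer_eq_of_pow_eq_zero {q : R} {M n : ℕ} (hq : q ^ M = 0) (hn : M ≤ n) :
    qPochhammer q n = qPochhammer q M := by
  induction n, hn using Nat.le_induction with
  | base => rfl
  | succ n hn ih => rw [qPochhammer_succ, ih, pow_eq_zero_of_le (by omega) hq, sub_zero, mul_one]

lemma isUnit_one_sub_pow {q : R} (hq : IsNilpotent q) {k : ℕ} (hk : k ≠ 0) :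
    IsUnit (1 - q ^ k) :=
  (hq.pow_of_pos hk).isUnit_one_sub

lemma isUnit_qPochhammer {q : R} (hq : IsNilpotent q) (n : ℕ) : IsUnit (qPochhammer q n) := by
  induction n with
  | zero => simp [qPochhammer_zero]
  | succ n ih => exact qPochhammer_succ q n ▸ ih.mul (isUnit_one_sub_pow hq n.succ_ne_zero)

/-! ### The Rogers–Ramanujan functional equations -/

/-- The number `r (5 r + 1) / 2`. -/
def quinticExp (r : ℕ) : ℕ := ∑ s ∈ range r, (5 * s + 3)

lemma quinticExp_succ (r : ℕ) : quinticExp (r + 1) = quinticExp r + (5 * r + 3) :=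
  sum_range_succ _ _

lemma two_mul_quinticExp (r : ℕ) : 2 * quinticExp r = r * (5 * r + 1) := by
  induction r with
  | zero => rfl
  | succ r ih => rw [quinticExp_succ, mul_add, ih]; ring

lemma le_quinticExp (r : ℕ) : r ≤ quinticExp r := by
  induction r with
  | zero => exact Nat.zero_le _
  | succ r ih => rw [quinticExp_succ]; omega

/-- The series `(q; q)_∞ * H₂(q ^ (k + 1))`, truncated to `L` terms, with `H₂` the second of the
auxiliary functions in the Rogers–Ramanujan proof of their identities. -/
def auxTwo (q : R) (L k : ℕ) : R :=
  ∑ r ∈ range L, (-1) ^ r * q ^ (2 * k * r + quinticExp r) * (1 - q ^ (2 * k + 2 + 4 * r)) *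
    shiftedPochhammer q r k

/-- The series `(q; q)_∞ * H₁(q ^ (k + 1))`, truncated to `L` terms, with `H₁` the first of the
auxiliary functions in the Rogers–Ramanujan proof of their identities. -/
def auxOne (q : R) (L k : ℕ) : R :=
  ∑ r ∈ range L, (-1) ^ r * q ^ (2 * k * r + quinticExp r + r) * (1 - q ^ (k + 1 + 2 * r)) *
    shiftedPochhammer q r k

lemma auxOne_eq_sub (q : R) (L k : ℕ) :
    auxOne q L k = auxTwo q L (k + 1) -
      (-1) ^ L * q ^ (2 * k * L + quinticExp L + L) * (1 - q ^ L) * shiftedPochhammer q L k := by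
  induction L with
  | zero => simp [auxOne, auxTwo]
  | succ L ih =>
    rw [auxOne, sum_range_succ, ← auxOne, ih, auxTwo, auxTwo, sum_range_succ, ← auxTwo]
    have h₁ := shiftedPochhammer_succ q L k
    have h₂ := shiftedPochhammer_succ' q L k
    rw [quinticExp_succ]
    linear_combination (-(-1) ^ L * q ^ (2 * k * L + quinticExp L + 2 * L)) * h₁
      + (-1) ^ L * q ^ (2 * k * L + quinticExp L + 2 * k + 6 * L + 4) * h₂

lemma auxTwo_eq_sub (q : R) (L k : ℕ) :
    auxTwo q L k = auxOne q L k + q ^ (k + 1) * auxOne q L (k + 1) -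
      (-1) ^ L * q ^ (2 * k * L + quinticExp L) * (1 - q ^ L) * shiftedPochhammer q L k := by
  induction L with
  | zero => simp [auxOne, auxTwo]
  | succ L ih =>
    rw [auxTwo, sum_range_succ, ← auxTwo, ih, auxOne, auxOne, auxOne, auxOne, sum_range_succ,
      sum_range_succ, ← auxOne, ← auxOne]
    have h₁ := shiftedPochhammer_succ q L k
    have h₂ := shiftedPochhammer_succ' q L k
    rw [quinticExp_succ]
    linear_combination (-(-1) ^ L * q ^ (2 * k * L + quinticExp L + 3 * L + k + 1)) * h₁
      + (-1) ^ L * q ^ (2 * k * L + quinticExp L + 2 * k + 5 * L + 3) * h₂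

lemma auxOne_eq_auxTwo {q : R} {M L : ℕ} (hq : q ^ M = 0) (hL : M ≤ L) (k : ℕ) :
    auxOne q L k = auxTwo q L (k + 1) := by
  rw [auxOne_eq_sub, pow_eq_zero_of_le (by omega) hq]
  simp

lemma auxTwo_eq_add {q : R} {M L : ℕ} (hq : q ^ M = 0) (hL : M ≤ L) (k : ℕ) :
    auxTwo q L k = auxTwo q L (k + 1) + q ^ (k + 1) * auxTwo q L (k + 2) := by
  have := le_quinticExp L
  rw [auxTwo_eq_sub, auxOne_eq_auxTwo hq hL, auxOne_eq_auxTwo hq hL,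
    pow_eq_zero_of_le (n := 2 * k * L + quinticExp L) (by omega) hq]
  simp

lemma auxTwo_of_le {q : R} {M L k : ℕ} (hq : q ^ M = 0) (hL₀ : L ≠ 0) (hk : M ≤ k) :
    auxTwo q L k = qPochhammer q M := by
  rw [auxTwo, sum_eq_single_of_mem 0 (by simpa using Nat.pos_of_ne_zero hL₀)]
  · rw [pow_eq_zero_of_le (n := 2 * k + 2 + 4 * 0) (by omega) hq,
      ← qPochhammer_eq_of_pow_eq_zero hq hk]
    simp [qPochhammer, quinticExp]
  · intro r _ hr
    have : k * 1 ≤ k * r := Nat.mul_le_mul_left k (by omega)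
    rw [pow_eq_zero_of_le (m := M) (by nlinarith) hq]
    simp

/-- The recurrence `S k = S (k + 1) + q ^ (k + 1) * S (k + 2)` together with the eventual value `1`
determines the sequence `S` up to the factor `(q; q)_∞`. -/
lemma auxTwo_eq_mul {q : R} {M L : ℕ} (hq : q ^ M = 0) (hL : M ≤ L) (hL₀ : L ≠ 0) {S : ℕ → R}
    (hS : ∀ k, S k = S (k + 1) + q ^ (k + 1) * S (k + 2)) (hS' : ∀ k, M ≤ k → S k = 1) (k : ℕ) :
    auxTwo q L k = qPochhammer q M * S k := by
  suffices h : ∀ j k, M ≤ k + j → auxTwo q L k = qPochhammer q M * S k from h M k (by omega)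
  intro j
  induction j using Nat.strong_induction_on with
  | _ j ih =>
    intro k hk
    by_cases hMk : M ≤ k
    · rw [auxTwo_of_le hq hL₀ hMk, hS' k hMk, mul_one]
    · rw [auxTwo_eq_add hq hL, hS k, ih (j - 1) (by omega) (k + 1) (by omega),
        ih (j - 1) (by omega) (k + 2) (by omega)]
      ring

/-! ### The `q`-binomial theorem and the triple product -/

/-- The Gaussian binomial coefficient. -/
def qBinom (q : R) : ℕ → ℕ → R
  | _, 0 => 1
  | 0, _ + 1 => 0
  | n + 1, k + 1 => qBinom q n k + q ^ (k + 1) * qBinom q n (k + 1)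

@[simp] lemma qBinom_zero_right (q : R) (n : ℕ) : qBinom q n 0 = 1 := by cases n <;> rfl

lemma qBinom_succ_succ (q : R) (n k : ℕ) :
    qBinom q (n + 1) (k + 1) = qBinom q n k + q ^ (k + 1) * qBinom q n (k + 1) := rfl

lemma qBinom_eq_zero_of_lt (q : R) {n k : ℕ} (h : n < k) : qBinom q n k = 0 := by
  induction n generalizing k with
  | zero => obtain ⟨k, rfl⟩ := Nat.exists_eq_succ_of_ne_zero h.ne'; rfl
  | succ n ih =>
    obtain ⟨k, rfl⟩ := Nat.exists_eq_succ_of_ne_zero (Nat.ne_zero_of_lt h)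
    rw [Nat.succ_eq_add_one, qBinom_succ_succ, ih (by omega), ih (by omega), mul_zero, add_zero]

lemma map_qBinom {S : Type*} [CommRing S] (f : R →+* S) (q : R) (n k : ℕ) :
    f (qBinom q n k) = qBinom (f q) n k := by
  induction n generalizing k with
  | zero => cases k <;> simp [qBinom]
  | succ n ih => cases k <;> simp [qBinom_succ_succ, ih]

lemma qBinom_mul_qPochhammer (q : R) (a b : ℕ) :
    qBinom q (a + b) a * qPochhammer q a * qPochhammer q b = qPochhammer q (a + b) := by
  suffices h : ∀ n a b, a + b = n →
      qBinom q n a * qPochhammer q a * qPochhammer q b = qPochhammer q n from h _ a b rfl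
  intro n
  induction n with
  | zero =>
    intro a b h
    obtain ⟨rfl, rfl⟩ : a = 0 ∧ b = 0 := by omega
    simp [qPochhammer_zero]
  | succ n ih =>
    rintro (_ | a) b h
    · obtain rfl : b = n + 1 := by omega
      simp [qPochhammer_zero]
    · have h₁ := ih a b (by omega)
      rw [qBinom_succ_succ, qPochhammer_succ q n]
      rcases b with _ | b
      · rw [qBinom_eq_zero_of_lt q (by omega : n < a + 1)]
        obtain rfl : a = n := by omega
        rw [qPochhammer_succ]
        linear_combination (1 - q ^ (a + 1)) * h₁
      · have h₂ := ih (a + 1) b (by omega)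
        have hn : n = a + b + 1 := by omega
        rw [qPochhammer_succ q a] at h₂ ⊢
        rw [qPochhammer_succ q b] at h₁ ⊢
        rw [hn] at h₁ h₂ ⊢
        linear_combination (1 - q ^ (a + 1)) * h₁ + q ^ (a + 1) * (1 - q ^ (b + 1)) * h₂

lemma prod_add_mul_pow (q x y : R) (n : ℕ) :
    ∏ k ∈ range n, (y + x * q ^ k) =
      ∑ k ∈ range (n + 1), q ^ k.choose 2 * qBinom q n k * x ^ k * y ^ (n - k) := by
  induction n generalizing x with
  | zero => simp
  | succ n ih =>
    have hshift : ∏ k ∈ range n, (y + x * q ^ (k + 1)) = ∏ k ∈ range n, (y + x * q * q ^ k) :=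
      prod_congr rfl fun k _ ↦ by ring
    have hchoose (k : ℕ) : (k + 1).choose 2 = k + k.choose 2 := by
      rw [Nat.choose_succ_succ', Nat.choose_one_right]
    have hx : ∑ k ∈ range (n + 1), q ^ (k + 1).choose 2 * qBinom q n k * x ^ (k + 1) * y ^ (n - k) =
        x * ∑ k ∈ range (n + 1), q ^ k.choose 2 * qBinom q n k * (x * q) ^ k * y ^ (n - k) := by
      rw [mul_sum]
      exact sum_congr rfl fun k _ ↦ by rw [hchoose]; ring
    have hy : ∑ k ∈ range (n + 1), q ^ (k + 1).choose 2 * (q ^ (k + 1) * qBinom q n (k + 1)) *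
          x ^ (k + 1) * y ^ (n - k) + y ^ (n + 1) =
        y * ∑ k ∈ range (n + 1), q ^ k.choose 2 * qBinom q n k * (x * q) ^ k * y ^ (n - k) := by
      rw [sum_range_succ, qBinom_eq_zero_of_lt q n.lt_succ_self, sum_range_succ', mul_add, mul_sum]
      simp only [mul_zero, zero_mul, add_zero]
      congr 1
      · refine sum_congr rfl fun k hk ↦ ?_
        obtain ⟨m, rfl⟩ := Nat.exists_eq_add_of_lt (mem_range.1 hk)
        rw [show k + m + 1 - k = m + 1 by omega, show k + m + 1 - (k + 1) = m by omega]
        ring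
      · simp [pow_succ']
    rw [prod_range_succ', hshift, ih, pow_zero, mul_one, mul_add, mul_comm _ y, mul_comm _ x, ← hx,
      ← hy, sum_range_succ' _ (n + 1)]
    simp only [qBinom_succ_succ, Nat.add_sub_add_right, mul_add, add_mul, sum_add_distrib]
    simp
    ring

end CommRing

lemma two_mul_choose_two (k : ℕ) : 2 * k.choose 2 + k = k * k := by
  induction k with
  | zero => rfl
  | succ k ih => rw [Nat.choose_succ_succ', Nat.choose_one_right]; linarith

lemma exponent_reflect {N A r m : ℕ} (hm : N = r + m) (hA : A + 1 = 5 * N) :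
    5 * m.choose 2 + A * (2 * r + m) = 5 * N.choose 2 + A * N + (quinticExp r + r) := by
  have h₁ := two_mul_choose_two m
  have h₂ := two_mul_choose_two N
  have h₃ := two_mul_quinticExp r
  subst hm
  refine Nat.eq_of_mul_eq_mul_left two_pos ?_
  zify at *
  linear_combination 5 * h₁ - 5 * h₂ - h₃ + 2 * r * hA

lemma exponent_shift {N A r m : ℕ} (hm : N = r + m + 1) (hA : A + 1 = 5 * N) :
    5 * (N + 1 + r).choose 2 + A * m =
      5 * N.choose 2 + A * N + (quinticExp r + r + (2 * r + 1)) := by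
  have h₁ := two_mul_choose_two (N + 1 + r)
  have h₂ := two_mul_choose_two N
  have h₃ := two_mul_quinticExp r
  subst hm
  refine Nat.eq_of_mul_eq_mul_left two_pos ?_
  zify at *
  linear_combination 5 * h₁ - 5 * h₂ - h₃ - 2 * (r + 1) * hA

open Polynomial in
lemma prod_X_pow_sub {N A : ℕ} (hA : A + 1 = 5 * N) :
    ∏ k ∈ range (2 * N), (X ^ A + -1 * (X ^ 5) ^ k : ℤ[X]) =
      (-1) ^ N * X ^ (5 * N.choose 2 + A * N) *
        ∏ k ∈ range N, ((1 - X ^ (5 * k + 1)) * (1 - X ^ (5 * k + 4)) : ℤ[X]) := by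
  have hlow : ∏ k ∈ range N, (X ^ A + -1 * (X ^ 5) ^ k : ℤ[X]) =
      (-1) ^ N * X ^ (5 * N.choose 2) * ∏ k ∈ range N, (1 - X ^ (5 * k + 4)) := by
    have hreflect : ∏ k ∈ range N, (1 - X ^ (5 * k + 4) : ℤ[X]) =
        ∏ k ∈ range N, (1 - X ^ (A - 5 * k)) := by
      rw [← prod_range_reflect]
      refine prod_congr rfl fun k hk ↦ ?_
      have := mem_range.1 hk
      congr 2
      omega
    have hpow : (X ^ (5 * N.choose 2) : ℤ[X]) = ∏ k ∈ range N, X ^ (5 * k) := by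
      rw [prod_pow_eq_pow_sum, ← mul_sum, sum_range_id, Nat.choose_two_right]
    have hsign : ((-1) ^ N : ℤ[X]) = ∏ k ∈ range N, (-1) := by simp
    rw [hreflect, hpow, hsign, ← prod_mul_distrib, ← prod_mul_distrib]
    refine prod_congr rfl fun k hk ↦ ?_
    obtain ⟨m, hm⟩ : ∃ m, A = 5 * k + m := ⟨A - 5 * k, by have := mem_range.1 hk; omega⟩
    rw [hm, Nat.add_sub_cancel_left]
    ring
  have hhigh : ∏ k ∈ range N, (X ^ A + -1 * (X ^ 5) ^ (N + k) : ℤ[X]) =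
      X ^ (A * N) * ∏ k ∈ range N, (1 - X ^ (5 * k + 1)) := by
    have hpow : (X ^ (A * N) : ℤ[X]) = ∏ k ∈ range N, X ^ A := by simp [pow_mul]
    rw [hpow, ← prod_mul_distrib]
    refine prod_congr rfl fun k _ ↦ ?_
    rw [← pow_mul, mul_add, ← hA]
    ring
  rw [two_mul, prod_range_add, hlow, hhigh, prod_mul_distrib]
  ring

open Polynomial in
lemma sum_qBinom_split {N A : ℕ} (hA : A + 1 = 5 * N) :
    ∑ k ∈ range (2 * N + 1), ((X ^ 5) ^ k.choose 2 * qBinom (X ^ 5) (2 * N) k * (-1) ^ k *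
      (X ^ A) ^ (2 * N - k) : ℤ[X]) =
      (-1) ^ N * X ^ (5 * N.choose 2 + A * N) *
        (∑ r ∈ range (N + 1),
          (-1) ^ r * X ^ (quinticExp r + r) * qBinom (X ^ 5) (2 * N) (N - r) -
        ∑ r ∈ range N,
          (-1) ^ r * X ^ (quinticExp r + r + (2 * r + 1)) * qBinom (X ^ 5) (2 * N) (N + 1 + r)) := by
  rw [show 2 * N + 1 = N + 1 + N by ring, sum_range_add, ← sum_range_reflect, mul_sub, mul_sum,
    mul_sum, sub_eq_add_neg, ← sum_neg_distrib]
  refine congrArg₂ (· + ·) ?_ ?_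
  · refine sum_congr rfl fun r hr ↦ ?_
    obtain ⟨m, hm⟩ := Nat.exists_eq_add_of_le (Nat.lt_succ_iff.1 (mem_range.1 hr))
    have hexp := exponent_reflect hm hA
    rw [show N + 1 - 1 - r = m by omega, show N - r = m by omega,
      show 2 * N - m = 2 * r + m by omega]
    have hsign : ((-1) ^ m : ℤ[X]) = (-1) ^ N * (-1) ^ r := by
      rw [hm, ← pow_add, show r + m + r = m + 2 * r by ring, pow_add, pow_mul]
      simp
    calc _ = (-1) ^ m * X ^ (5 * m.choose 2 + A * (2 * r + m)) * qBinom (X ^ 5) (2 * N) m := by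
            ring
      _ = _ := by rw [hexp, hsign]; ring
  · refine sum_congr rfl fun r hr ↦ ?_
    obtain ⟨m, hm⟩ := Nat.exists_eq_add_of_lt (mem_range.1 hr)
    have hexp := exponent_shift hm hA
    rw [show 2 * N - (N + 1 + r) = m by omega]
    calc _ = (-1) ^ (N + 1 + r) * X ^ (5 * (N + 1 + r).choose 2 + A * m) *
            qBinom (X ^ 5) (2 * N) (N + 1 + r) := by ring
      _ = _ := by rw [hexp]; ring

open Polynomial in
/-- A finite form of the Jacobi triple product in base `X ^ 5`. -/
lemma finite_triple_product (N : ℕ) :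
    ∏ k ∈ range N, ((1 - X ^ (5 * k + 1)) * (1 - X ^ (5 * k + 4)) : ℤ[X]) =
      ∑ r ∈ range (N + 1),
        (-1) ^ r * X ^ (quinticExp r + r) * qBinom (X ^ 5) (2 * N) (N - r) -
      ∑ r ∈ range N,
        (-1) ^ r * X ^ (quinticExp r + r + (2 * r + 1)) * qBinom (X ^ 5) (2 * N) (N + 1 + r) := by
  rcases N.eq_zero_or_pos with rfl | hN
  · simp [quinticExp]
  obtain ⟨A, hA⟩ : ∃ A, A + 1 = 5 * N := ⟨5 * N - 1, by omega⟩
  have h := prod_add_mul_pow (X ^ 5 : ℤ[X]) (-1) (X ^ A) (2 * N)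
  rw [prod_X_pow_sub hA, sum_qBinom_split hA] at h
  exact mul_left_cancel₀ (by simp) h

section Nilpotent

variable {R : Type*} [CommRing R]

lemma qBinom_mul_qPochhammer_of_pow_eq_zero {q : R} {M a b : ℕ} (hq : q ^ M = 0) (ha : M ≤ a)
    (hb : M ≤ b) : qBinom q (a + b) a * qPochhammer q M = 1 := by
  have h := qBinom_mul_qPochhammer q a b
  rw [qPochhammer_eq_of_pow_eq_zero hq ha, qPochhammer_eq_of_pow_eq_zero hq hb,
    qPochhammer_eq_of_pow_eq_zero hq (show M ≤ a + b by omega)] at h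
  exact (isUnit_qPochhammer ⟨M, hq⟩ M).mul_right_cancel (h.trans (one_mul _).symm)

/-- The Jacobi triple product for `∑ (-1) ^ j q ^ (j (5 j + 3) / 2)`, with `q` nilpotent. -/
lemma triple_product {q : R} {M N : ℕ} (hq : q ^ M = 0) (hN : 2 * M ≤ N) :
    (∏ k ∈ range N, ((1 - q ^ (5 * k + 1)) * (1 - q ^ (5 * k + 4)))) * qPochhammer (q ^ 5) N =
      auxOne q N 0 := by
  have h := congrArg (Polynomial.aeval q) (finite_triple_product N)
  have hmap (n k : ℕ) : Polynomial.aeval q (qBinom (Polynomial.X ^ 5 : Polynomial ℤ) n k) =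
      qBinom (q ^ 5) n k := by
    have := map_qBinom (Polynomial.aeval q : Polynomial ℤ →ₐ[ℤ] R).toRingHom (Polynomial.X ^ 5) n k
    rwa [map_pow, AlgHom.toRingHom_eq_coe, RingHom.coe_coe, Polynomial.aeval_X] at this
  simp only [map_prod, map_sum, map_mul, map_sub, map_one, map_pow, map_neg, Polynomial.aeval_X,
    hmap] at h
  have hq5 : (q ^ 5) ^ M = 0 := by rw [← pow_mul]; exact pow_eq_zero_of_le (by omega) hq
  have hbinom (r k e : ℕ) (hk : r < M → M ≤ k ∧ M + k ≤ 2 * N) (he : r ≤ e) :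
      q ^ e * qBinom (q ^ 5) (2 * N) k * qPochhammer (q ^ 5) N = q ^ e := by
    rcases lt_or_ge r M with hr | hr
    · obtain ⟨b, hb⟩ := Nat.exists_eq_add_of_le (show k ≤ 2 * N by have := hk hr; omega)
      have := hk hr
      rw [hb, qPochhammer_eq_of_pow_eq_zero hq5 (by omega : M ≤ N), mul_assoc,
        qBinom_mul_qPochhammer_of_pow_eq_zero hq5 (by omega) (by omega), mul_one]
    · rw [pow_eq_zero_of_le (by omega) hq, zero_mul, zero_mul]
  have hle := le_quinticExp
  rw [h, sub_mul, sum_mul, sum_mul, auxOne, sum_range_succ, pow_eq_zero_of_le (n := quinticExp N + N)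
    (by omega) hq, mul_zero, zero_mul, zero_mul, add_zero, ← sum_sub_distrib]
  refine sum_congr rfl fun r _ ↦ ?_
  have h₁ := hbinom r (N - r) (quinticExp r + r) (by omega) (by omega)
  have h₂ := hbinom r (N + 1 + r) (quinticExp r + r + (2 * r + 1)) (by omega) (by omega)
  simp only [shiftedPochhammer, range_zero, prod_empty, mul_zero, zero_mul, zero_add, mul_one]
  linear_combination (-1) ^ r * h₁ - (-1) ^ r * h₂

lemma qPochhammer_five_mul (q : R) (N : ℕ) :
    qPochhammer q (5 * N) =
      (∏ k ∈ range N, ((1 - q ^ (5 * k + 1)) * (1 - q ^ (5 * k + 4)))) * qPochhammer (q ^ 5) N *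
        ∏ k ∈ range N, ((1 - q ^ (5 * k + 2)) * (1 - q ^ (5 * k + 3))) := by
  induction N with
  | zero => simp [qPochhammer_zero]
  | succ N ih =>
    rw [mul_add, mul_one]
    simp only [qPochhammer_succ, prod_range_succ, ih]
    ring

/-- The second Rogers–Ramanujan identity with `q` nilpotent. -/
theorem second_identity {q : R} {M N : ℕ} (hq : q ^ M = 0) (hN : 2 * M ≤ N) (hN₀ : N ≠ 0)
    {S : ℕ → R} (hS : ∀ k, S k = S (k + 1) + q ^ (k + 1) * S (k + 2))
    (hS' : ∀ k, M ≤ k → S k = 1) :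
    S 1 * ∏ k ∈ range N, ((1 - q ^ (5 * k + 2)) * (1 - q ^ (5 * k + 3))) = 1 := by
  have h := triple_product hq hN
  have hunit := isUnit_qPochhammer ⟨M, hq⟩ (5 * N)
  rw [auxOne_eq_auxTwo hq (by omega), zero_add, auxTwo_eq_mul hq (by omega) hN₀ hS hS',
    ← qPochhammer_eq_of_pow_eq_zero hq (by omega : M ≤ 5 * N)] at h
  rw [qPochhammer_five_mul] at h hunit
  refine (isUnit_of_mul_isUnit_left hunit).mul_left_cancel ?_
  linear_combination -h

end Nilpotent

/-! ### Partitions with gaps -/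

/-- The lists with sum `n`, entries at least `a`, and every entry at least two more than each
earlier one. -/
def gapLists (a n : ℕ) : Set (List ℕ) :=
  {l | (∀ x ∈ l, a ≤ x) ∧ l.Pairwise (fun x y ↦ x + 2 ≤ y) ∧ l.sum = n}

lemma sort_coe_of_pairwise {l : List ℕ} (h : l.Pairwise (fun x y ↦ x + 2 ≤ y)) :
    (l : Multiset ℕ).sort (· ≤ ·) = l := by
  rw [Multiset.coe_sort]
  exact List.mergeSort_of_pairwise (h.imp fun hxy ↦ by simp; omega)

/-- Sorting identifies gap partitions with gap lists. -/
def gapPartitionEquiv {a : ℕ} (ha : 1 ≤ a) (n : ℕ) :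
    {p : n.Partition // (∀ x ∈ p.parts, a ≤ x) ∧
      List.IsChain (fun x y ↦ x + 2 ≤ y) (p.parts.sort (· ≤ ·))} ≃ gapLists a n where
  toFun p := ⟨p.1.parts.sort (· ≤ ·), fun x hx ↦ p.2.1 x ((Multiset.mem_sort _).1 hx), by
      have : IsTrans ℕ (fun x y ↦ x + 2 ≤ y) := ⟨fun a b c _ _ ↦ by omega⟩
      exact List.isChain_iff_pairwise.1 p.2.2, by
      rw [← Multiset.sum_coe, Multiset.sort_eq, p.1.parts_sum]⟩
  invFun l := ⟨⟨l.1, fun {x} hx ↦ ha.trans (l.2.1 x hx), by simpa using l.2.2.2⟩, l.2.1, by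
      rw [sort_coe_of_pairwise l.2.2.1]
      exact l.2.2.1.isChain⟩
  left_inv p := by
    ext1; ext1
    simp
  right_inv l := Subtype.ext (sort_coe_of_pairwise l.2.2.1)

lemma gapCount_eq_ncard {a : ℕ} (ha : 1 ≤ a) (n : ℕ) : gapCount 2 a n = (gapLists a n).ncard :=
  Nat.card_congr (gapPartitionEquiv ha n)

lemma finite_gapLists {a : ℕ} (ha : 1 ≤ a) (n : ℕ) : (gapLists a n).Finite :=
  Set.finite_coe_iff.1 (Finite.of_equiv _ (gapPartitionEquiv ha n))

lemma gapCount_anti {a b : ℕ} (ha : 1 ≤ a) (hab : a ≤ b) (n : ℕ) :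
    gapCount 2 b n ≤ gapCount 2 a n := by
  rw [gapCount_eq_ncard ha, gapCount_eq_ncard (ha.trans hab)]
  exact Set.ncard_le_ncard (fun l hl ↦ ⟨fun x hx ↦ hab.trans (hl.1 x hx), hl.2⟩)
    (finite_gapLists ha n)

lemma mem_gapLists_iff {a n : ℕ} {l : List ℕ} :
    l ∈ gapLists a n ↔
      l ∈ gapLists (a + 1) n ∨ ∃ l' m, l' ∈ gapLists (a + 2) m ∧ a + m = n ∧ a :: l' = l := by
  constructor
  · rintro ⟨hge, hgap, hsum⟩
    rcases l with _ | ⟨x, l⟩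
    · exact .inl ⟨by simp, hgap, hsum⟩
    · rw [List.pairwise_cons] at hgap
      rw [List.sum_cons] at hsum
      have hx := hge x List.mem_cons_self
      rcases hx.eq_or_lt with rfl | hlt
      · exact .inr ⟨l, l.sum, ⟨hgap.1, hgap.2, rfl⟩, hsum, rfl⟩
      · refine .inl ⟨fun y hy ↦ ?_, List.pairwise_cons.2 hgap, by rwa [List.sum_cons]⟩
        rcases List.mem_cons.1 hy with rfl | hy
        · exact hlt
        · have := hgap.1 y hy
          omega
  · rintro (⟨hge, hl⟩ | ⟨l', m, ⟨hge, hgap, hsum⟩, hn, rfl⟩)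
    · exact ⟨fun x hx ↦ (Nat.le_succ a).trans (hge x hx), hl⟩
    · refine ⟨fun x hx ↦ ?_, List.pairwise_cons.2 ⟨hge, hgap⟩, by rw [List.sum_cons, hsum, hn]⟩
      rcases List.mem_cons.1 hx with rfl | hx
      · exact le_rfl
      · have := hge x hx
        omega

lemma gapCount_of_lt {a n : ℕ} (ha : 1 ≤ a) (h : n < a) :
    gapCount 2 a n = gapCount 2 (a + 1) n := by
  rw [gapCount_eq_ncard ha, gapCount_eq_ncard (by omega)]
  congr 1
  ext l
  rw [mem_gapLists_iff]
  exact or_iff_left fun ⟨_, _, _, hn, _⟩ ↦ by omega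

lemma gapCount_add_left {a : ℕ} (ha : 1 ≤ a) (m : ℕ) :
    gapCount 2 a (a + m) = gapCount 2 (a + 1) (a + m) + gapCount 2 (a + 2) m := by
  rw [gapCount_eq_ncard ha, gapCount_eq_ncard (by omega), gapCount_eq_ncard (by omega),
    ← Set.ncard_image_of_injective (gapLists (a + 2) m) (List.cons_injective (a := a)),
    ← Set.ncard_union_eq _ (finite_gapLists (by omega) _)
      ((finite_gapLists (by omega) _).image _)]
  · congr 1
    ext l
    rw [mem_gapLists_iff]
    refine or_congr_right ⟨?_, ?_⟩
    · rintro ⟨l', m', hl', hm, rfl⟩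
      obtain rfl : m' = m := by omega
      exact ⟨l', hl', rfl⟩
    · rintro ⟨l', hl', rfl⟩
      exact ⟨l', m, hl', rfl, rfl⟩
  · rw [Set.disjoint_left]
    rintro _ ⟨hge, -⟩ ⟨l', -, rfl⟩
    have := hge a List.mem_cons_self
    omega

lemma gapCount_zero {a : ℕ} (ha : 1 ≤ a) : gapCount 2 a 0 = 1 := by
  rw [gapCount_eq_ncard ha, Set.ncard_eq_one]
  refine ⟨[], Set.eq_singleton_iff_unique_mem.2 ⟨⟨by simp, by simp, rfl⟩, ?_⟩⟩
  rintro (_ | ⟨x, l⟩) ⟨hge, -, hsum⟩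
  · rfl
  · have := hge x List.mem_cons_self
    rw [List.sum_cons] at hsum
    omega

lemma gapCount_eq_zero {a n : ℕ} (hn : n ≠ 0) (h : n < a) : gapCount 2 a n = 0 := by
  rw [gapCount_eq_ncard (by omega), Set.ncard_eq_zero (finite_gapLists (by omega) n)]
  refine Set.eq_empty_of_forall_notMem ?_
  rintro (_ | ⟨x, l⟩) ⟨hge, -, hsum⟩
  · exact hn hsum.symm
  · have := hge x List.mem_cons_self
    rw [List.sum_cons] at hsum
    omega

/-! ### Generating functions -/

open PowerSeries

/-- The generating function of the partitions with parts greater than `k` and gaps at least `2`. -/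
noncomputable def gapSeries (k : ℕ) : ℤ⟦X⟧ := .mk fun n ↦ (gapCount 2 (k + 1) n : ℤ)

lemma coeff_gapSeries (k n : ℕ) : coeff n (gapSeries k) = gapCount 2 (k + 1) n := coeff_mk _ _

lemma gapSeries_eq_add (k : ℕ) :
    gapSeries k = gapSeries (k + 1) + X ^ (k + 1) * gapSeries (k + 2) := by
  ext n
  rw [map_add, coeff_X_pow_mul']
  simp only [coeff_gapSeries]
  split_ifs with h
  · obtain ⟨m, rfl⟩ := Nat.exists_eq_add_of_le h
    rw [gapCount_add_left (by omega), Nat.add_sub_cancel_left]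
    push_cast
    rfl
  · rw [gapCount_of_lt (by omega) (by omega), add_zero]

lemma X_pow_dvd_gapSeries_sub_one {M k : ℕ} (h : M ≤ k) : X ^ M ∣ gapSeries k - 1 := by
  rw [X_pow_dvd_iff]
  intro m hm
  rw [map_sub, coeff_gapSeries, coeff_one]
  split_ifs with h₀
  · rw [h₀, gapCount_zero (by omega), Nat.cast_one, sub_self]
  · rw [gapCount_eq_zero h₀ (by omega), Nat.cast_zero, sub_zero]

/-- The generating function of `congMinusCount 2 3`. -/
noncomputable def congSeries : ℤ⟦X⟧ := .mk fun n ↦ (congMinusCount 2 3 n : ℤ)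

/-- The parts allowed by `congMinusCount 2 3`. -/
def IsCongPart (x : ℕ) : Prop := (x % 5 = 2 ∨ x % 5 = 3) ∧ x ≠ 2

instance : DecidablePred IsCongPart := fun _ ↦ inferInstanceAs (Decidable (_ ∧ _))

lemma congMinusCount_eq_card (n : ℕ) :
    congMinusCount 2 3 n = #(Nat.Partition.restricted n IsCongPart) := by
  rw [congMinusCount, Nat.Partition.restricted, Nat.card_eq_fintype_card, Fintype.card_subtype]
  congr 1
  ext p
  simp only [mem_filter, mem_univ, true_and, ← forall₂_and]
  refine forall₂_congr fun x _ ↦ ?_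
  simp only [Nat.ModEq, IsCongPart]
  omega

open PowerSeries.WithPiTopology in
lemma exists_X_pow_dvd_congSeries_mul (M : ℕ) : ∃ N₀, ∀ N ≥ N₀, X ^ M ∣
    congSeries * ∏ i ∈ range N, (if IsCongPart (i + 1) then 1 - X ^ (i + 1) else 1) - 1 := by
  have h := (Nat.Partition.hasProd_powerSeriesMk_card_restricted ℤ IsCongPart).tendsto_prod_nat
  simp only [← congMinusCount_eq_card] at h
  rw [← congSeries, tendsto_iff_coeff_tendsto] at h
  have hev : ∀ᶠ N in Filter.atTop, ∀ m ∈ range M, coeff m (∏ i ∈ range N,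
      if IsCongPart (i + 1) then ∑' j : ℕ, (X ^ ((i + 1) * j) : ℤ⟦X⟧) else 1) =
        coeff m congSeries := by
    rw [Filter.eventually_all_finset]
    intro m _
    have := h m
    rwa [nhds_discrete, Filter.tendsto_pure] at this
  obtain ⟨N₀, hN₀⟩ := Filter.eventually_atTop.1 hev
  refine ⟨N₀, fun N hN ↦ ?_⟩
  have hinv : (∏ i ∈ range N,
      if IsCongPart (i + 1) then ∑' j : ℕ, (X ^ ((i + 1) * j) : ℤ⟦X⟧) else 1) *
      ∏ i ∈ range N, (if IsCongPart (i + 1) then 1 - X ^ (i + 1) else 1) = 1 := by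
    rw [← prod_mul_distrib]
    refine prod_eq_one fun i _ ↦ ?_
    split_ifs
    · simp_rw [pow_mul]
      exact tsum_pow_mul_one_sub_of_constantCoeff_eq_zero (by simp)
    · exact one_mul 1
  generalize ∏ i ∈ range N, (if IsCongPart (i + 1) then 1 - X ^ (i + 1) else 1 : ℤ⟦X⟧) = P at hinv ⊢
  rw [← hinv, ← sub_mul]
  refine Dvd.dvd.mul_right (X_pow_dvd_iff.2 fun m hm ↦ ?_) _
  rw [map_sub, hN₀ N hN m (mem_range.2 hm), sub_self]

lemma prod_isCongPart {R : Type*} [CommRing R] (q : R) {N : ℕ} (hN : 1 ≤ N) :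
    ∏ k ∈ range N, ((1 - q ^ (5 * k + 2)) * (1 - q ^ (5 * k + 3))) =
      (1 - q ^ 2) * ∏ i ∈ range (5 * N), (if IsCongPart (i + 1) then 1 - q ^ (i + 1) else 1) := by
  induction N, hN using Nat.le_induction with
  | base => simp [prod_range_succ, IsCongPart]
  | succ N hN ih =>
    have h₁ : ¬ IsCongPart (5 * N + 1) := by unfold IsCongPart; omega
    have h₂ : IsCongPart (5 * N + 1 + 1) := by unfold IsCongPart; omega
    have h₃ : IsCongPart (5 * N + 2 + 1) := by unfold IsCongPart; omega
    have h₄ : ¬ IsCongPart (5 * N + 3 + 1) := by unfold IsCongPart; omega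
    have h₅ : ¬ IsCongPart (5 * N + 4 + 1) := by unfold IsCongPart; omega
    rw [prod_range_succ, ih, mul_add, mul_one]
    simp only [prod_range_succ, h₁, h₂, h₃, h₄, h₅, if_true, if_false]
    ring

lemma X_pow_dvd_congSeries_sub (M : ℕ) :
    X ^ M ∣ congSeries - (1 - X ^ 2) * gapSeries 1 := by
  obtain ⟨N₀, hN₀⟩ := exists_X_pow_dvd_congSeries_mul M
  set π := Ideal.Quotient.mk (Ideal.span {(X ^ M : ℤ⟦X⟧)}) with hπ
  have hdvd {f g : ℤ⟦X⟧} : X ^ M ∣ f - g ↔ π f = π g := by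
    rw [hπ, Ideal.Quotient.eq, Ideal.mem_span_singleton]
  have hq : π X ^ M = 0 := by
    rw [← map_pow, hπ, Ideal.Quotient.eq_zero_iff_mem]
    exact Ideal.mem_span_singleton_self _
  have hS := second_identity (N := N₀ + 2 * M + 1) hq (by omega) (by omega)
    (S := fun k ↦ π (gapSeries k))
    (fun k ↦ by rw [gapSeries_eq_add, map_add, map_mul, map_pow])
    (fun k hk ↦ by rw [hdvd.1 (X_pow_dvd_gapSeries_sub_one hk), map_one])
  have hC := hdvd.1 (hN₀ (5 * (N₀ + 2 * M + 1)) (by omega))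
  rw [map_mul, map_prod, map_one] at hC
  simp only [apply_ite π, map_sub, map_one, map_pow] at hC
  rw [prod_isCongPart _ (by omega)] at hS
  rw [hdvd, map_mul, map_sub, map_one, map_pow]
  linear_combination (1 - π X ^ 2) * π (gapSeries 1) * hC - π congSeries * hS

end RogersRamanujan

open RogersRamanujan PowerSeries in
theorem stmt11 (n : ℕ) (hn : 1 ≤ n) :
    congMinusCount 2 3 n ≤ gapCount 2 3 n := by
  have h := X_pow_dvd_iff.1 (X_pow_dvd_congSeries_sub (n + 1)) n n.lt_succ_self
  have hrec : congSeries - (1 - X ^ 2) * gapSeries 1 =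
      congSeries - gapSeries 2 + X ^ 2 * (gapSeries 1 - gapSeries 3) := by
    linear_combination -gapSeries_eq_add 1
  rw [hrec, map_add, map_sub, coeff_X_pow_mul', coeff_gapSeries, congSeries, coeff_mk,
    show 2 + 1 = 3 from rfl] at h
  split_ifs at h with h2
  · have := gapCount_anti (by omega : 1 ≤ 2) (by omega : 2 ≤ 4) (n - 2)
    rw [map_sub, coeff_gapSeries, coeff_gapSeries, show 1 + 1 = 2 from rfl,
      show 3 + 1 = 4 from rfl] at h
    omega
  · omega
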